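/- arXiv:2103.07174 — 2 statements merged into one kernel-verified Lean document; each statement's English description precedes it below -/
import Mathlib

section
/- Let a,b,S>0. The system of equations in positive reals t,s>0 given by t − aS(t+s)^{1/3} = 0 and s − bS²(t+s)^{2/3} = 0 has a unique solution (t₀,s₀); explicitly t₀ = (abS³ + a√(b²S⁶ + 4aS³))/2 and s₀ = abS³ + (b³S⁶ + b²S³√(b²S⁶ + 4aS³))/2. Moreover, if t,s>0 satisfy t − aS(t+s)^{1/3} ≥ 0 and s − bS²(t+s)^{2/3} ≥ 0, then t ≥ t₀ and s ≥ s₀. -/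
open Real

noncomputable section

theorem cube_root_aux (u : ℝ) (hu : 0 < u) :
    ∃ x : ℝ, 0 < x ∧ x ^ 3 = u ∧ u ^ ((1 : ℝ) / 3) = x ∧ u ^ ((2 : ℝ) / 3) = x ^ 2 := by
  refine ⟨u ^ ((1 : ℝ) / 3), by positivity, ?_, rfl, ?_⟩
  · rw [← Real.rpow_natCast, ← Real.rpow_mul hu.le]
    norm_num
  · rw [← Real.rpow_natCast, ← Real.rpow_mul hu.le]
    norm_num

/-- the system `t = aS(t+s)^{1/3}`, `s = bS²(t+s)^{2/3}` in positive reals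
has a unique solution `(t₀, s₀)`, given explicitly, and any `t, s > 0` with
`t − aS(t+s)^{1/3} ≥ 0` and `s − bS²(t+s)^{2/3} ≥ 0` satisfy `t ≥ t₀`, `s ≥ s₀`. -/
theorem statement3 (a b S : ℝ) (ha : 0 < a) (hb : 0 < b) (hS : 0 < S) :
    ∃ t₀ s₀ : ℝ,
      t₀ = (a * b * S ^ 3 + a * Real.sqrt (b ^ 2 * S ^ 6 + 4 * a * S ^ 3)) / 2 ∧
      s₀ = a * b * S ^ 3 +
        (b ^ 3 * S ^ 6 + b ^ 2 * S ^ 3 * Real.sqrt (b ^ 2 * S ^ 6 + 4 * a * S ^ 3)) / 2 ∧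
      0 < t₀ ∧ 0 < s₀ ∧
      t₀ - a * S * (t₀ + s₀) ^ ((1 : ℝ) / 3) = 0 ∧
      s₀ - b * S ^ 2 * (t₀ + s₀) ^ ((2 : ℝ) / 3) = 0 ∧
      (∀ t s : ℝ, 0 < t → 0 < s →
        t - a * S * (t + s) ^ ((1 : ℝ) / 3) = 0 →
        s - b * S ^ 2 * (t + s) ^ ((2 : ℝ) / 3) = 0 → t = t₀ ∧ s = s₀) ∧
      (∀ t s : ℝ, 0 < t → 0 < s →
        0 ≤ t - a * S * (t + s) ^ ((1 : ℝ) / 3) →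
        0 ≤ s - b * S ^ 2 * (t + s) ^ ((2 : ℝ) / 3) → t₀ ≤ t ∧ s₀ ≤ s) := by
  obtain ⟨r, hr⟩ : ∃ r, r = Real.sqrt (b ^ 2 * S ^ 6 + 4 * a * S ^ 3) := ⟨_, rfl⟩
  have hr0 : 0 < r := by rw [hr]; positivity
  have hr2 : r ^ 2 = b ^ 2 * S ^ 6 + 4 * a * S ^ 3 := by
    rw [hr]; exact Real.sq_sqrt (by positivity)
  rw [← hr]
  obtain ⟨y, hy⟩ : ∃ y, y = (b * S ^ 3 + r) / (2 * S) := ⟨_, rfl⟩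
  have hy0 : 0 < y := by rw [hy]; positivity
  have hry : r = 2 * S * y - b * S ^ 3 := by rw [hy]; field_simp; ring
  have hy2 : y ^ 2 = a * S + b * S ^ 2 * y := by
    rw [hry] at hr2
    have : S ^ 2 * (y ^ 2 - (a * S + b * S ^ 2 * y)) = 0 := by linarith
    have h2 := (mul_eq_zero.1 this).resolve_left (by positivity)
    linarith
  have hyb : b * S ^ 2 < y := by
    have h1 : 0 < a * S := by positivity
    by_contra h
    push Not at h
    nlinarith
  have ht : (a * b * S ^ 3 + a * r) / 2 = a * S * y := by rw [hry]; ring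
  have hs : a * b * S ^ 3 + (b ^ 3 * S ^ 6 + b ^ 2 * S ^ 3 * r) / 2 = b * S ^ 2 * y ^ 2 := by
    rw [hry, hy2]; ring
  have hmin : ∀ t s : ℝ, 0 < t → 0 < s →
        0 ≤ t - a * S * (t + s) ^ ((1 : ℝ) / 3) →
        0 ≤ s - b * S ^ 2 * (t + s) ^ ((2 : ℝ) / 3) → y ≤ (t + s) ^ ((1 : ℝ) / 3) := by
    intro t s ht hs h1 h2
    obtain ⟨x, hx, hx3, e1, e2⟩ := cube_root_aux (t + s) (by positivity)
    rw [e1] at h1 ⊢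
    rw [e2] at h2
    have h3 : 0 ≤ x * ((x - y) * (x + y - b * S ^ 2)) := by
      have : x * ((x - y) * (x + y - b * S ^ 2))
        = x ^ 3 - x * (y ^ 2 - b * S ^ 2 * y) - b * S ^ 2 * x ^ 2 := by ring
      rw [this, hy2]
      linarith
    have h4 := nonneg_of_mul_nonneg_right h3 hx
    have h5 := nonneg_of_mul_nonneg_left h4 (by linarith)
    linarith
  refine ⟨_, _, rfl, rfl, by positivity, by positivity, ?_, ?_, ?_, ?_⟩
  · rw [ht, hs]
    obtain ⟨x, hx, hx3, e1, e2⟩ := cube_root_aux (a * S * y + b * S ^ 2 * y ^ 2) (by positivity)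
    have : x ^ 3 = y ^ 3 := by rw [hx3]; linear_combination (-y) * hy2
    have hxy : x = y := by
      exact (pow_left_inj₀ hx.le hy0.le (by norm_num)).1 this
    rw [e1, hxy]; ring
  · rw [ht, hs]
    obtain ⟨x, hx, hx3, e1, e2⟩ := cube_root_aux (a * S * y + b * S ^ 2 * y ^ 2) (by positivity)
    have : x ^ 3 = y ^ 3 := by rw [hx3]; linear_combination (-y) * hy2
    have hxy : x = y := by
      exact (pow_left_inj₀ hx.le hy0.le (by norm_num)).1 this
    rw [e2, hxy]; ring
  · intro t s ht0 hs0 h1 h2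
    rw [ht, hs]
    obtain ⟨x, hx, hx3, e1, e2⟩ := cube_root_aux (t + s) (by positivity)
    rw [e1] at h1
    rw [e2] at h2
    have h3 : x * ((x + y - b * S ^ 2) * (x - y)) = 0 := by
      linear_combination hx3 + h1 + h2 - x * hy2
    have h4 := (mul_eq_zero.1 h3).resolve_left hx.ne'
    have h5 := (mul_eq_zero.1 h4).resolve_left (by linarith)
    have hxy : x = y := by linarith
    subst hxy
    constructor <;> linarith
  · intro t s ht0 hs0 h1 h2
    have h := hmin t s ht0 hs0 h1 h2
    rw [ht, hs]
    obtain ⟨x, hx, hx3, e1, e2⟩ := cube_root_aux (t + s) (by positivity)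
    rw [e1] at h1 h
    rw [e2] at h2
    have g1 : a * S * y ≤ a * S * x := by gcongr
    have g2 : b * S ^ 2 * y ^ 2 ≤ b * S ^ 2 * x ^ 2 := by gcongr
    constructor <;> linarith

end
end

section
/- Let a,b,S>0 and suppose l>0 satisfies (al + bl²)^{1/3} ≤ l/S. Then l ≥ bS³/2 + √(b²S⁶/4 + aS³), and consequently (a/3)l + (b/12)l² ≥ abS³/4 + b³S⁶/24 + (4aS + b²S⁴)^{3/2}/24. -/
open Real

noncomputable section

/-- if `l > 0` satisfies `(al + bl²)^{1/3} ≤ l/S`, then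
`l ≥ bS³/2 + √(b²S⁶/4 + aS³)` and consequently
`(a/3)l + (b/12)l² ≥ abS³/4 + b³S⁶/24 + (4aS + b²S⁴)^{3/2}/24`. -/
theorem statement17 (a b S l : ℝ) (ha : 0 < a) (hb : 0 < b) (hS : 0 < S) (hl : 0 < l)
    (h : (a * l + b * l ^ 2) ^ ((1 : ℝ) / 3) ≤ l / S) :
    b * S ^ 3 / 2 + Real.sqrt (b ^ 2 * S ^ 6 / 4 + a * S ^ 3) ≤ l ∧
    a * b * S ^ 3 / 4 + b ^ 3 * S ^ 6 / 24 +
        (4 * a * S + b ^ 2 * S ^ 4) ^ ((3 : ℝ) / 2) / 24 ≤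
      a / 3 * l + b / 12 * l ^ 2 := by
  have hE : 0 < 4 * a * S + b ^ 2 * S ^ 4 := by positivity
  obtain ⟨r, hr⟩ : ∃ r, r = Real.sqrt (4 * a * S + b ^ 2 * S ^ 4) := ⟨_, rfl⟩
  have hr0 : 0 < r := by rw [hr]; exact Real.sqrt_pos.mpr hE
  have hr2 : r ^ 2 = 4 * a * S + b ^ 2 * S ^ 4 := by rw [hr]; exact Real.sq_sqrt hE.le
  have hD : Real.sqrt (b ^ 2 * S ^ 6 / 4 + a * S ^ 3) = S * r / 2 := by
    rw [show b ^ 2 * S ^ 6 / 4 + a * S ^ 3 = (S * r / 2) ^ 2 by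
      rw [div_pow, mul_pow, hr2]; ring]
    exact Real.sqrt_sq (by positivity)
  have hP : (4 * a * S + b ^ 2 * S ^ 4) ^ ((3 : ℝ) / 2) = r ^ 3 := by
    rw [← hr2, ← Real.rpow_natCast r 2, ← Real.rpow_mul hr0.le, ← Real.rpow_natCast r 3]
    norm_num
  have hc : a * l + b * l ^ 2 ≤ (l / S) ^ 3 := by
    have hx : 0 < a * l + b * l ^ 2 := by positivity
    have h3 := pow_le_pow_left₀ (by positivity) h 3
    rw [← Real.rpow_natCast, ← Real.rpow_mul hx.le] at h3
    norm_num at h3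
    exact h3
  have hq : S ^ 3 * (a + b * l) ≤ l ^ 2 := by
    rw [div_pow, le_div_iff₀ (by positivity)] at hc
    refine le_of_mul_le_mul_left ?_ hl
    linarith
  have hm : b * S ^ 3 / 2 + S * r / 2 ≤ l := by
    have h1 : (S * r / 2) ^ 2 ≤ (l - b * S ^ 3 / 2) ^ 2 := by
      rw [div_pow, mul_pow, hr2]; linarith
    have h2 : b * S ^ 3 ≤ l := by
      refine le_of_mul_le_mul_left ?_ hl
      have : 0 < S ^ 3 * a := by positivity
      linarith
    have h3 : 0 < b * S ^ 3 := by positivity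
    have := abs_le_of_sq_le_sq h1 (by linarith)
    linarith [le_abs_self (S * r / 2)]
  rw [hD, hP]
  refine ⟨hm, ?_⟩
  have hm2 : (b * S ^ 3 / 2 + S * r / 2) ^ 2 ≤ l ^ 2 := pow_le_pow_left₀ (by positivity) hm 2
  have e : a * b * S ^ 3 / 4 + b ^ 3 * S ^ 6 / 24 + r ^ 3 / 24
      = a / 3 * (b * S ^ 3 / 2 + S * r / 2) + b / 12 * (b * S ^ 3 / 2 + S * r / 2) ^ 2 := by
    linear_combination (r / 24 - b * S ^ 2 / 48) * hr2
  rw [e]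
  gcongr

end
end
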